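/- If f : ℝ → ℝ is a smooth even function, then there exists a smooth function φ : [0,∞) → ℝ such that f(r) = φ(r²) for all r ∈ ℝ. -/

import Mathlib

/-!
Two ingredients carry the proof.

* **Borel's lemma** (`exists_contDiff_iteratedDeriv_zero_eq`): every real sequence is the sequence
  of derivatives at `0` of some smooth function. Choose a smooth `g` whose Taylor series at `0` is
  `∑ c₂ₖ tᵏ`, where `∑ cⱼ rʲ` is the Taylor series of `f`. The odd `cⱼ` vanish since `f` is even,
  so `h r = f r - g (r ^ 2)` is flat at `0`: all its derivatives vanish there.
* **Flat functions may be composed with the square root** (`contDiff_comp_sqrt_of_flat`): if `h`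
  is smooth and flat at `0`, then `t ↦ h (√t)`, which is `0` for `t ≤ 0`, is smooth on all of `ℝ`.
  The family of functions `t ↦ h (√t) (√t)⁻ᵐ`, over all flat `h` and all `m`, consists of
  differentiable functions and is closed under differentiation up to linear combinations.

Then `φ t = g t + h (√t)` works, because `h` is even and `√(r ^ 2) = |r|`.
-/

open Filter Topology Asymptotics

section TaylorBorel

open scoped Nat

/-! ### Taylor expansions at zero and flatness -/

lemma taylor_zero_isLittleO {f : ℝ → ℝ} (hf : ContDiff ℝ (⊤ : ℕ∞) f) (n : ℕ) :
    (fun x => f x - ∑ k ∈ Finset.range (n + 1), ((k ! : ℝ)⁻¹ * x ^ k) * iteratedDeriv k f 0)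
      =o[𝓝 0] fun x => x ^ n := by
  have h := taylor_isLittleO_univ (x₀ := 0) (n := n) (hf.of_le (by exact_mod_cast le_top))
  simpa [taylor_within_apply, iteratedDerivWithin_univ] using h

lemma isLittleO_pow_of_flat {h : ℝ → ℝ} (hh : ContDiff ℝ (⊤ : ℕ∞) h)
    (h0 : ∀ k, iteratedDeriv k h 0 = 0) (n : ℕ) : h =o[𝓝 0] fun x => x ^ n := by
  simpa [h0] using taylor_zero_isLittleO hh n

lemma flat_of_isLittleO_pow {h : ℝ → ℝ} (hh : ContDiff ℝ (⊤ : ℕ∞) h)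
    (ho : ∀ n : ℕ, h =o[𝓝 0] fun x => x ^ n) (k : ℕ) : iteratedDeriv k h 0 = 0 := by
  induction k using Nat.strong_induction_on with
  | _ k ih =>
    have h1 := (ho k).sub (taylor_zero_isLittleO hh k)
    have h2 : (fun x : ℝ => ((k ! : ℝ)⁻¹ * iteratedDeriv k h 0) * x ^ k) =o[𝓝 0]
        fun x => x ^ k := by
      refine h1.congr_left fun x => ?_
      rw [Finset.sum_range_succ, Finset.sum_eq_zero]
      · ring
      · intro j hj
        rw [ih j (Finset.mem_range.1 hj), mul_zero]
    by_contra hne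
    have hc : (k ! : ℝ)⁻¹ * iteratedDeriv k h 0 ≠ 0 :=
      mul_ne_zero (inv_ne_zero (by exact_mod_cast k.factorial_ne_zero)) hne
    rw [isLittleO_const_mul_left_iff hc] at h2
    have h3 := h2.mono (nhdsWithin_le_nhds (s := {0}ᶜ))
    have h4 : ∀ᶠ x : ℝ in 𝓝[≠] 0, x ^ k ≠ 0 := by
      filter_upwards [self_mem_nhdsWithin] with x hx using pow_ne_zero k hx
    exact isLittleO_irrefl h4.frequently h3

lemma iteratedDeriv_zero_eq_zero_of_even {f : ℝ → ℝ} (heven : ∀ r, f (-r) = f r) {n : ℕ}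
    (hn : Odd n) : iteratedDeriv n f 0 = 0 := by
  have h := iteratedDeriv_comp_neg n f (0 : ℝ)
  simp only [heven, hn.neg_one_pow, neg_zero, smul_eq_mul] at h
  linarith

/-! ### Borel's lemma -/

/-- A rescaled monomial `a tᵏ χ(l t)`, with `χ` a cutoff equal to `1` near `0`: for a large scale
`l`, all its derivatives of order below `k` are small. -/
lemma exists_truncated_monomial (a : ℝ) (k : ℕ) :
    ∃ u : ℝ → ℝ, ContDiff ℝ (⊤ : ℕ∞) u ∧ (∀ᶠ t in 𝓝 0, u t = a * t ^ k) ∧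
      (∀ i, ∃ C, ∀ t, |iteratedDeriv i u t| ≤ C) ∧
      ∀ i < k, ∀ t, |iteratedDeriv i u t| ≤ (1 / 2) ^ k := by
  let χ : ContDiffBump (0 : ℝ) := ⟨1, 2, one_pos, one_lt_two⟩
  let P : ℝ → ℝ := fun s => s ^ k * χ s
  have hP : ContDiff ℝ (⊤ : ℕ∞) P := (contDiff_id.pow k).mul χ.contDiff
  have hPc : HasCompactSupport P := χ.hasCompactSupport.mul_left
  have hbd : ∀ i, ∃ C, ∀ t, |iteratedDeriv i P t| ≤ C := by
    intro i
    have hc : HasCompactSupport (iteratedFDeriv ℝ i P) := hPc.iteratedFDeriv i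
    obtain ⟨C, hC⟩ := hc.exists_bound_of_continuous
      (hP.continuous_iteratedFDeriv (by exact_mod_cast le_top))
    refine ⟨C, fun t => ?_⟩
    simpa [norm_iteratedFDeriv_eq_norm_iteratedDeriv] using hC t
  choose C hC using hbd
  have hC0 : ∀ i, 0 ≤ C i := fun i => (abs_nonneg _).trans (hC i 0)
  let M := ∑ i ∈ Finset.range k, C i
  have hM0 : 0 ≤ M := Finset.sum_nonneg fun i _ => hC0 i
  let l : ℝ := 1 + 2 ^ k * (|a| * M)
  have hl1 : 1 ≤ l := le_add_of_nonneg_right (by positivity)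
  have hl0 : 0 < l := by linarith
  have hder : ∀ i t, iteratedDeriv i (fun t => (a * (l ^ k)⁻¹) * P (l * t)) t
      = (a * (l ^ k)⁻¹) * (l ^ i * iteratedDeriv i P (l * t)) := by
    intro i t
    rw [iteratedDeriv_const_mul_field, iteratedDeriv_comp_const_mul
      (hP.of_le (by exact_mod_cast le_top))]
  refine ⟨fun t => (a * (l ^ k)⁻¹) * P (l * t), ?_, ?_, ?_, ?_⟩
  · exact contDiff_const.mul (hP.comp (contDiff_const.mul contDiff_id))
  · have ht : Tendsto (fun t : ℝ => l * t) (𝓝 0) (𝓝 0) := by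
      have hcont : Continuous fun t : ℝ => l * t := by fun_prop
      simpa only [mul_zero] using hcont.tendsto 0
    filter_upwards [ht.eventually χ.eventuallyEq_one] with t ht
    simp only [P, ht, Pi.one_apply, mul_pow]
    field_simp
  · intro i
    refine ⟨|a * (l ^ k)⁻¹| * (l ^ i * C i), fun t => ?_⟩
    rw [hder, abs_mul, abs_mul (l ^ i), abs_of_nonneg (pow_nonneg hl0.le i)]
    gcongr
    exact hC i _
  · intro i hi t
    have hCM : C i ≤ M := Finset.single_le_sum (fun i _ => hC0 i) (Finset.mem_range.2 hi)
    have hpow : l ^ i * l ≤ l ^ k := by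
      rw [← pow_succ]
      exact pow_le_pow_right₀ hl1 hi
    rw [hder, abs_mul, abs_mul, abs_mul, abs_of_nonneg (pow_nonneg hl0.le i),
      abs_of_nonneg (inv_nonneg.2 (pow_nonneg hl0.le k))]
    calc |a| * (l ^ k)⁻¹ * (l ^ i * |iteratedDeriv i P (l * t)|)
        ≤ |a| * (l ^ i * l)⁻¹ * (l ^ i * M) := by
          gcongr
          exact (hC i _).trans hCM
      _ = |a| * M / l := by field_simp
      _ ≤ (1 / 2) ^ k := by
          rw [div_le_iff₀ hl0, one_div, inv_pow, inv_mul_eq_div, le_div_iff₀ (by positivity)]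
          simp only [l]
          linarith

/-- **Borel's lemma**: the derivatives at `0` of a smooth function can be prescribed. -/
theorem exists_contDiff_iteratedDeriv_zero_eq (a : ℕ → ℝ) :
    ∃ g : ℝ → ℝ, ContDiff ℝ (⊤ : ℕ∞) g ∧ ∀ k, iteratedDeriv k g 0 = a k := by
  choose u hu hu0 hub hus using fun k => exists_truncated_monomial (a k * (k ! : ℝ)⁻¹) k
  choose C hC using hub
  let v : ℕ → ℕ → ℝ := fun i k => if i < k then (1 / 2) ^ k else C k i
  have hv : ∀ i : ℕ, (i : ℕ∞) ≤ (⊤ : ℕ∞) → Summable (v i) := by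
    intro i _
    refine (summable_geometric_two).congr_cofinite ?_
    rw [Nat.cofinite_eq_atTop]
    filter_upwards [eventually_gt_atTop i] with k hk
    simp [v, hk]
  have hb : ∀ (i k : ℕ) (x : ℝ), (i : ℕ∞) ≤ (⊤ : ℕ∞) → ‖iteratedFDeriv ℝ i (u k) x‖ ≤ v i k := by
    intro i k x _
    rw [norm_iteratedFDeriv_eq_norm_iteratedDeriv, Real.norm_eq_abs]
    by_cases h : i < k
    · simpa [v, h] using hus k i h x
    · simpa [v, h] using hC k i x
  refine ⟨fun t => ∑' k, u k t, contDiff_tsum hu hv hb, fun i => ?_⟩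
  have hs : Summable fun k => iteratedFDeriv ℝ i (u k) 0 :=
    .of_norm_bounded (hv i le_top) fun k => hb i k 0 le_top
  have hterm : ∀ k, iteratedDeriv i (u k) 0 = if k = i then a i else 0 := by
    intro k
    rw [EventuallyEq.iteratedDeriv_eq i (hu0 k), iteratedDeriv_const_mul_field,
      iteratedDeriv_fun_pow_zero]
    by_cases h : k = i
    · subst h
      have : (k ! : ℝ) ≠ 0 := by exact_mod_cast k.factorial_ne_zero
      simp [this]
    · simp [h, Ne.symm h]
  rw [iteratedDeriv_eq_iteratedFDeriv, iteratedFDeriv_tsum_apply hu hv hb le_top,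
    ContinuousMultilinearMap.tsum_eval hs]
  simp_rw [← iteratedDeriv_eq_iteratedFDeriv, hterm]
  simp

/-! ### Flat functions of the square root -/

/-- The function `t ↦ h (√t) (√t)⁻ᵐ`. For `t ≤ 0` both `√t` and its inverse are `0`, so that it
vanishes there as soon as `h 0 = 0`. -/
noncomputable def sqrtQuot (h : ℝ → ℝ) (m : ℕ) (t : ℝ) : ℝ := h √t * (√t)⁻¹ ^ m

lemma hasDerivAt_sqrtQuot {h : ℝ → ℝ} (hh : ContDiff ℝ (⊤ : ℕ∞) h)
    (h0 : ∀ k, iteratedDeriv k h 0 = 0) (m : ℕ) (t : ℝ) :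
    HasDerivAt (sqrtQuot h m)
      (1 / 2 * sqrtQuot (deriv h) (m + 1) t - m / 2 * sqrtQuot h (m + 2) t) t := by
  have hz : h 0 = 0 := by simpa using h0 0
  have hneg : ∀ s ≤ 0, sqrtQuot h m s = 0 := fun s hs => by
    simp [sqrtQuot, Real.sqrt_eq_zero_of_nonpos hs, hz]
  rcases lt_trichotomy t 0 with ht | rfl | ht
  · have hval : 1 / 2 * sqrtQuot (deriv h) (m + 1) t - m / 2 * sqrtQuot h (m + 2) t = 0 := by
      simp [sqrtQuot, Real.sqrt_eq_zero_of_nonpos ht.le]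
    rw [hval]
    refine (hasDerivAt_const t (0 : ℝ)).congr_of_eventuallyEq ?_
    filter_upwards [gt_mem_nhds ht] with s hs using hneg s hs.le
  · have hval : 1 / 2 * sqrtQuot (deriv h) (m + 1) 0 - m / 2 * sqrtQuot h (m + 2) 0 = 0 := by
      simp [sqrtQuot]
    rw [hval, hasDerivAt_iff_isLittleO, isLittleO_iff]
    intro c hc
    have hs : Tendsto (fun t : ℝ => √t) (𝓝 0) (𝓝 0) := by
      simpa using Real.continuous_sqrt.tendsto 0
    -- Flatness to order `m + 2` leaves a factor `(√t) ^ 2 = t` after division by `(√t) ^ m`.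
    filter_upwards [hs.eventually ((isLittleO_pow_of_flat hh h0 (m + 2)).bound hc)] with t ht
    rcases le_or_gt t 0 with h1 | h1
    · simp only [hneg t h1, hneg 0 le_rfl, smul_zero, sub_zero, norm_zero]
      positivity
    · have hp : 0 < √t := Real.sqrt_pos.2 h1
      simp only [hneg 0 le_rfl, smul_zero, sub_zero, Real.norm_eq_abs] at ht ⊢
      rw [abs_of_pos (pow_pos hp _)] at ht
      rw [sqrtQuot, abs_mul, abs_of_pos (pow_pos (inv_pos.2 hp) m), abs_of_pos h1]
      calc |h √t| * (√t)⁻¹ ^ m ≤ c * √t ^ (m + 2) * (√t)⁻¹ ^ m := by gcongr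
        _ = c * √t ^ 2 := by
          rw [pow_add, inv_pow]
          field_simp
        _ = c * t := by rw [Real.sq_sqrt h1.le]
  · have hp : 0 < √t := Real.sqrt_pos.2 ht
    have hd : HasDerivAt h (deriv h √t) √t :=
      (hh.differentiable (by simp) _).hasDerivAt
    have hs := Real.hasDerivAt_sqrt ht.ne'
    have := (hd.comp t hs).mul ((hs.inv hp.ne').pow m)
    refine this.congr_deriv ?_
    rcases m with _ | m
    · simp [sqrtQuot]
      ring
    · simp only [sqrtQuot, Nat.add_sub_cancel, Function.comp, Pi.inv_apply, Pi.pow_apply, inv_pow]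
      field_simp
      push_cast
      ring

lemma contDiff_sqrtQuot (n : ℕ) : ∀ {h : ℝ → ℝ}, ContDiff ℝ (⊤ : ℕ∞) h →
    (∀ k, iteratedDeriv k h 0 = 0) → ∀ m : ℕ, ContDiff ℝ n (sqrtQuot h m) := by
  induction n with
  | zero =>
    intro h hh h0 m
    exact contDiff_zero.2
      (continuous_iff_continuousAt.2 fun t => (hasDerivAt_sqrtQuot hh h0 m t).continuousAt)
  | succ n ih =>
    intro h hh h0 m
    have hh' : ContDiff ℝ (⊤ : ℕ∞) (deriv h) := (contDiff_infty_iff_deriv.1 hh).2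
    have h0' : ∀ k, iteratedDeriv k (deriv h) 0 = 0 := fun k => by
      rw [← iteratedDeriv_succ']
      exact h0 (k + 1)
    have hd := hasDerivAt_sqrtQuot hh h0 m
    push_cast
    rw [contDiff_succ_iff_deriv]
    refine ⟨fun t => (hd t).differentiableAt, by simp, ?_⟩
    rw [funext fun t => (hd t).deriv]
    exact (contDiff_const.mul (ih hh' h0' _)).sub (contDiff_const.mul (ih hh h0 _))

lemma contDiff_comp_sqrt_of_flat {h : ℝ → ℝ} (hh : ContDiff ℝ (⊤ : ℕ∞) h)
    (h0 : ∀ k, iteratedDeriv k h 0 = 0) : ContDiff ℝ (⊤ : ℕ∞) fun t => h √t := by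
  refine contDiff_infty.2 fun n => ?_
  have heq : (fun t => h √t) = sqrtQuot h 0 := by
    funext t
    simp [sqrtQuot]
  rw [heq]
  exact contDiff_sqrtQuot n hh h0 0

end TaylorBorel

/-! ### Even functions -/

/-- a smooth even function of `r` is a smooth function of `r²`. -/
theorem stmt5 (f : ℝ → ℝ) (hf : ContDiff ℝ (⊤ : ℕ∞) f) (heven : ∀ r, f (-r) = f r) :
    ∃ φ : ℝ → ℝ, ContDiff ℝ (⊤ : ℕ∞) φ ∧ ∀ r, f r = φ (r ^ 2) := by
  obtain ⟨g, hg, hgk⟩ := exists_contDiff_iteratedDeriv_zero_eq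
    fun k => (k.factorial : ℝ) * (((2 * k).factorial : ℝ)⁻¹ * iteratedDeriv (2 * k) f 0)
  let h : ℝ → ℝ := fun r => f r - g (r ^ 2)
  have hh : ContDiff ℝ (⊤ : ℕ∞) h := hf.sub (hg.comp (contDiff_id.pow 2))
  -- The odd terms of the Taylor polynomial of `f` vanish, the even ones are those of `g (r ^ 2)`.
  have hsum : ∀ (n : ℕ) (r : ℝ),
      ∑ k ∈ Finset.range (2 * n + 1), ((k.factorial : ℝ)⁻¹ * r ^ k) * iteratedDeriv k f 0
        = ∑ k ∈ Finset.range (n + 1), ((k.factorial : ℝ)⁻¹ * (r ^ 2) ^ k) * iteratedDeriv k g 0 := by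
    intro n r
    induction n with
    | zero => simp [hgk]
    | succ n ih =>
      have hne : ((n + 1).factorial : ℝ) ≠ 0 := by exact_mod_cast (n + 1).factorial_ne_zero
      rw [show 2 * (n + 1) + 1 = 2 * n + 1 + 1 + 1 by ring, Finset.sum_range_succ,
        Finset.sum_range_succ, ih, Finset.sum_range_succ _ (n + 1),
        iteratedDeriv_zero_eq_zero_of_even heven (odd_two_mul_add_one n), hgk,
        show 2 * n + 1 + 1 = 2 * (n + 1) by ring, ← pow_mul]
      field_simp
      ring
  have ho : ∀ n : ℕ, h =o[𝓝 0] fun r => r ^ n := by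
    intro n
    have hsq : Tendsto (fun r : ℝ => r ^ 2) (𝓝 0) (𝓝 0) := by
      simpa using (continuous_pow 2 : Continuous fun r : ℝ => r ^ 2).tendsto 0
    have h1 := taylor_zero_isLittleO hf (2 * n)
    have h2 := (taylor_zero_isLittleO hg n).comp_tendsto hsq
    have h3 : h =o[𝓝 0] fun r => r ^ (2 * n) := by
      refine (h1.sub (h2.congr_right fun r => ?_)).congr_left fun r => ?_
      · simp [pow_mul]
      · simp only [hsum, Function.comp, h]
        ring
    rcases n.eq_zero_or_pos with rfl | hn
    · simpa using h3
    · exact h3.trans (isLittleO_pow_pow (by omega))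
  refine ⟨fun t => g t + h √t,
    hg.add (contDiff_comp_sqrt_of_flat hh (flat_of_isLittleO_pow hh ho)), fun r => ?_⟩
  have habs : f |r| = f r := by
    rcases abs_choice r with hr | hr <;> simp [hr, heven]
  simp [h, Real.sqrt_sq_eq_abs, habs]
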